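/- Let φ: ℝ × ℝ × ℝ → ℝ, (ε,t,S) ↦ φ(ε,t,S), be twice continuously differentiable, such that for each (ε,t) the map φ(ε,t,·) is a diffeomorphism of ℝ with inverse ψ(ε,t,·), where ψ is also twice continuously differentiable. Define u(ε,t,s) := ∂ₜφ(ε,t,ψ(ε,t,s)) and η(ε,t,s) := ∂_εφ(ε,t,ψ(ε,t,s)). Then for all (ε,t,s): ∂_ε u = ∂ₜη + u·∂ₛη − η·∂ₛu. -/

import Mathlib

/-!
In Lagrangian coordinates the definitions read `u(ε,t,φ(ε,t,S)) = ∂ₜφ(ε,t,S)` and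
`η(ε,t,φ(ε,t,S)) = ∂_εφ(ε,t,S)`. Differentiating the first in `ε` and the second in `t` gives
`∂_ε u + η ∂ₛu = ∂_ε∂ₜφ` and `∂ₜη + u ∂ₛη = ∂ₜ∂_εφ`, evaluated at `S = ψ(ε,t,s)`
(`fderiv_eulerian`); the right-hand sides agree because `φ` is `C²`.
-/

/-- The chain rule for a field `G` on Eulerian space whose pullback along
`(ε,t,S) ↦ (ε,t,F(ε,t,S))` is the derivative of `F` in the constant direction `v`. -/
lemma fderiv_eulerian {F G : ℝ × ℝ × ℝ → ℝ} (hF : ContDiff ℝ 2 F) (hG : Differentiable ℝ G)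
    (v : ℝ × ℝ × ℝ) (h : ∀ q, G (q.1, q.2.1, F q) = fderiv ℝ F q v) (q w : ℝ × ℝ × ℝ) :
    fderiv ℝ G (q.1, q.2.1, F q) (w.1, w.2.1, fderiv ℝ F q w) =
      fderiv ℝ (fderiv ℝ F) q w v := by
  have hFd : HasFDerivAt F (fderiv ℝ F q) q := (hF.differentiable (by norm_num) q).hasFDerivAt
  have hD : Differentiable ℝ (fderiv ℝ F) :=
    (hF.fderiv_right (m := 1) (by norm_num)).differentiable (by norm_num)
  have h1 := (hasFDerivAt_fst (𝕜 := ℝ) (p := q)).prodMk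
    (((hasFDerivAt_fst (𝕜 := ℝ) (p := q.2)).comp q hasFDerivAt_snd).prodMk hFd)
  have h2 := (hG (q.1, q.2.1, F q)).hasFDerivAt.comp q h1
  have h3 := (hD q).hasFDerivAt.clm_apply (hasFDerivAt_const v q)
  have h4 := (h2.congr_of_eventuallyEq
    (Filter.Eventually.of_forall fun x => (h x).symm)).unique h3
  simpa using DFunLike.congr_fun h4 w

/-- Variation of the Eulerian velocity: for a family of diffeomorphisms `φ(ε,t,·)` of `ℝ`
with inverses `ψ(ε,t,·)`, with `u = (∂ₜφ) ∘ φ⁻¹` and `η = (∂_εφ) ∘ φ⁻¹`, one has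
`∂_ε u = ∂ₜη + u ∂ₛη − η ∂ₛu`. -/
theorem variation_of_eulerian_velocity
    (φ ψ : ℝ → ℝ → ℝ → ℝ)
    (hφ : ContDiff ℝ 2 (fun p : ℝ × ℝ × ℝ => φ p.1 p.2.1 p.2.2))
    (hψ : ContDiff ℝ 2 (fun p : ℝ × ℝ × ℝ => ψ p.1 p.2.1 p.2.2))
    (hinv₁ : ∀ ε t s, φ ε t (ψ ε t s) = s)
    (hinv₂ : ∀ ε t S, ψ ε t (φ ε t S) = S)
    (u η : ℝ → ℝ → ℝ → ℝ)
    (hu : ∀ ε t s, u ε t s = deriv (fun τ => φ ε τ (ψ ε t s)) t)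
    (hη : ∀ ε t s, η ε t s = deriv (fun e => φ e t (ψ ε t s)) ε) :
    ∀ ε t s, deriv (fun e => u e t s) ε =
      deriv (fun τ => η ε τ s) t + u ε t s * deriv (fun σ => η ε t σ) s
        - η ε t s * deriv (fun σ => u ε t σ) s := by
  intro ε t s
  let F : ℝ × ℝ × ℝ → ℝ := fun p => φ p.1 p.2.1 p.2.2
  let P : ℝ × ℝ × ℝ → ℝ := fun p => ψ p.1 p.2.1 p.2.2
  have hF : ContDiff ℝ 2 F := hφ
  have hP : ContDiff ℝ 2 P := hψ
  let G : ℝ × ℝ × ℝ → ℝ × ℝ × ℝ → ℝ := fun v p => fderiv ℝ F (p.1, p.2.1, P p) v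
  have hG : ∀ v, Differentiable ℝ (G v) := by
    intro v
    have hD : Differentiable ℝ (fderiv ℝ F) :=
      (hF.fderiv_right (m := 1) (by norm_num)).differentiable (by norm_num)
    have hPd : Differentiable ℝ P := hP.differentiable (by norm_num)
    have hc : Differentiable ℝ fun p : ℝ × ℝ × ℝ => fderiv ℝ F (p.1, p.2.1, P p) :=
      hD.comp (by fun_prop : Differentiable ℝ fun p : ℝ × ℝ × ℝ => (p.1, p.2.1, P p))
    exact hc.clm_apply (differentiable_const v)
  have hGF : ∀ v q, G v (q.1, q.2.1, F q) = fderiv ℝ F q v := by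
    rintro v ⟨a, b, c⟩
    simp only [G, P, F, hinv₂]
  have line₁ : ∀ a b c : ℝ, HasDerivAt (fun x : ℝ => (x, b, c)) ((1, 0, 0) : ℝ × ℝ × ℝ) a :=
    fun a b c => (hasDerivAt_id a).prodMk (hasDerivAt_const a (b, c))
  have line₂ : ∀ a b c : ℝ, HasDerivAt (fun x : ℝ => (a, x, c)) ((0, 1, 0) : ℝ × ℝ × ℝ) b :=
    fun a b c => (hasDerivAt_const b a).prodMk ((hasDerivAt_id b).prodMk (hasDerivAt_const b c))
  have line₃ : ∀ a b c : ℝ, HasDerivAt (fun x : ℝ => (a, b, x)) ((0, 0, 1) : ℝ × ℝ × ℝ) c :=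
    fun a b c => (hasDerivAt_const c a).prodMk ((hasDerivAt_const c b).prodMk (hasDerivAt_id c))
  have hFd : Differentiable ℝ F := hF.differentiable (by norm_num)
  have hu' : ∀ a b c, u a b c = G (0, 1, 0) (a, b, c) := fun a b c => by
    rw [hu]
    exact ((hFd (a, b, ψ a b c)).hasFDerivAt.comp_hasDerivAt b (line₂ a b (ψ a b c))).deriv
  have hη' : ∀ a b c, η a b c = G (1, 0, 0) (a, b, c) := fun a b c => by
    rw [hη]
    exact ((hFd (a, b, ψ a b c)).hasFDerivAt.comp_hasDerivAt a (line₁ a b (ψ a b c))).deriv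
  have d₁ : deriv (fun e => u e t s) ε = fderiv ℝ (G (0, 1, 0)) (ε, t, s) (1, 0, 0) := by
    simp only [hu']
    exact ((hG _ (ε, t, s)).hasFDerivAt.comp_hasDerivAt ε (line₁ ε t s)).deriv
  have d₂ : deriv (fun τ => η ε τ s) t = fderiv ℝ (G (1, 0, 0)) (ε, t, s) (0, 1, 0) := by
    simp only [hη']
    exact ((hG _ (ε, t, s)).hasFDerivAt.comp_hasDerivAt t (line₂ ε t s)).deriv
  have d₃ : deriv (fun σ => η ε t σ) s = fderiv ℝ (G (1, 0, 0)) (ε, t, s) (0, 0, 1) := by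
    simp only [hη']
    exact ((hG _ (ε, t, s)).hasFDerivAt.comp_hasDerivAt s (line₃ ε t s)).deriv
  have d₄ : deriv (fun σ => u ε t σ) s = fderiv ℝ (G (0, 1, 0)) (ε, t, s) (0, 0, 1) := by
    simp only [hu']
    exact ((hG _ (ε, t, s)).hasFDerivAt.comp_hasDerivAt s (line₃ ε t s)).deriv
  have hs : F (ε, t, ψ ε t s) = s := hinv₁ ε t s
  have A := fderiv_eulerian hF (hG _) (0, 1, 0) (hGF _) (ε, t, ψ ε t s) (1, 0, 0)
  have B := fderiv_eulerian hF (hG _) (1, 0, 0) (hGF _) (ε, t, ψ ε t s) (0, 1, 0)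
  have hsymm : fderiv ℝ (fderiv ℝ F) (ε, t, ψ ε t s) (1, 0, 0) (0, 1, 0) =
      fderiv ℝ (fderiv ℝ F) (ε, t, ψ ε t s) (0, 1, 0) (1, 0, 0) :=
    (hF.contDiffAt.isSymmSndFDerivAt (by simp)) _ _
  have eu : fderiv ℝ F (ε, t, ψ ε t s) (0, 1, 0) = u ε t s := (hu' ε t s).symm
  have eη : fderiv ℝ F (ε, t, ψ ε t s) (1, 0, 0) = η ε t s := (hη' ε t s).symm
  have split₁ : ((1, 0, η ε t s) : ℝ × ℝ × ℝ) = (1, 0, 0) + η ε t s • (0, 0, 1) := by simp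
  have split₂ : ((0, 1, u ε t s) : ℝ × ℝ × ℝ) = (0, 1, 0) + u ε t s • (0, 0, 1) := by simp
  simp only [hs, eη] at A
  simp only [hs, eu] at B
  rw [split₁, map_add, map_smul, smul_eq_mul] at A
  rw [split₂, map_add, map_smul, smul_eq_mul] at B
  rw [d₁, d₂, d₃, d₄]
  linarith
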